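/- As p → ∞, the Taylor coefficients a_p of A satisfy a_p · u_c^p = (b/Γ(−1/3)) · p^{−4/3} + O(p^{−5/3}), where b = −(27/20)·(3/2)^{2/3} and Γ denotes the Gamma function. -/

import Mathlib

/-!
Statement 0: As `p → ∞`, the Taylor coefficients `a_p` of `A = Â ∘ û⁻¹` satisfy
`a_p · u_c^p = (b/Γ(−1/3)) · p^{−4/3} + O(p^{−5/3})`,
where `b = −(27/20)·(3/2)^{2/3}`.
-/

noncomputable def tc : ℝ := Real.sqrt 10 / (8 * (7 + Real.sqrt 7) ^ ((3:ℝ)/2))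

noncomputable def uc : ℝ := (6/5) * (7 + Real.sqrt 7) * tc

/-- The rational parametrization `û` of the `u`-variable. -/
noncomputable def uhat (H : ℂ) : ℂ :=
  ((uc : ℂ) / 3) * H * (10 - 12 * H + 6 * H ^ 2 - H ^ 3)

/-- The rational parametrization `Â` of the generating function `A`. -/
noncomputable def Ahat (H : ℂ) : ℂ :=
  (1/10) * ((((3:ℝ)/2) ^ ((7:ℝ)/3) : ℝ) : ℂ) * (9 - 8 * H + 3 * H ^ 2) / (3 - 3 * H + H ^ 2) ^ 2

noncomputable def bconst : ℝ := -(27/20) * ((3:ℝ)/2) ^ ((2:ℝ)/3)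

/-!
Put `h = 1 - H`, so that `û / u_c` becomes `U(h) = 1 - h³ (2 + h) / 3`. The point `H = 0` is the
simple zero `h = 1` of `U`, while `h = 0` is a degenerate saddle point with critical value `1`. For
`p ≥ 1`, substituting `u = û(H)` in Cauchy's formula writes `2πi a_p u_c^p` as the integral of
`(Â - Â(1)) U' / U^(p+1)` around `h = 1`; the loop can be taken to be the triangle with vertices
`0` and `4 exp(± πi/3)`, on which `|U| > 1` except at `0`. The side opposite to `0` is then
exponentially small, and Laplace's method applies to the other two: there `U⁻¹ = 1 + (2/3) h³ + ⋯`,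
and `(Â - Â(1)) U' / U` vanishes to order three at `0`, which gives the order
`p^(-(3+1)/3) = p^(-4/3)` with relative error `p^(-1/3)`. The difference of the two phases combines
with `Γ(4/3)` into `1 / Γ(-1/3)` by the reflection formula.
-/

open Complex Metric Filter Topology Asymptotics

lemma hasFPowerSeriesAt_tsum_mul_pow {𝕜 : Type*} [NontriviallyNormedField 𝕜] [CompleteSpace 𝕜]
    {α : ℕ → 𝕜} {z : 𝕜} (hz : z ≠ 0) (hsum : Summable fun k => α k * z ^ k) :
    HasFPowerSeriesAt (fun u => ∑' k, α k * u ^ k) (FormalMultilinearSeries.ofScalars 𝕜 α) 0 := by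
  have hradius : 0 < (FormalMultilinearSeries.ofScalars 𝕜 α).radius := by
    refine (ENNReal.coe_pos.mpr (nnnorm_pos.mpr hz)).trans_le
      (FormalMultilinearSeries.le_radius_of_tendsto _ (l := 0) ?_)
    simpa [FormalMultilinearSeries.ofScalars_norm, norm_mul] using
      hsum.tendsto_atTop_zero.norm
  have hsum_eq : (FormalMultilinearSeries.ofScalars 𝕜 α).sum = fun u => ∑' k, α k * u ^ k :=
    funext fun u => FormalMultilinearSeries.ofScalars_sum_eq α u
  exact hsum_eq ▸ (FormalMultilinearSeries.hasFPowerSeriesOnBall _ hradius).hasFPowerSeriesAt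

section DSlope

variable {𝕜 : Type*} [NontriviallyNormedField 𝕜] {c : 𝕜} {g φ A : 𝕜 → 𝕜}

lemma sub_mul_dslope_of_eq_zero (hφc : φ c = 0) (z : 𝕜) : (z - c) * dslope φ c z = φ z := by
  simpa [hφc] using sub_smul_dslope φ c z

lemma dslope_ne_zero {z : 𝕜} (hφc : φ c = 0) (hφ'c : deriv φ c ≠ 0)
    (hφ : z ≠ c → φ z ≠ 0) : dslope φ c z ≠ 0 := by
  rcases eq_or_ne z c with rfl | hzc
  · rwa [dslope_same]
  · exact right_ne_zero_of_mul (sub_mul_dslope_of_eq_zero hφc z ▸ hφ hzc)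

lemma dslope_div_dslope_eventuallyEq (hA : DifferentiableAt 𝕜 A 0) (hφc : φ c = 0)
    (hφ'c : deriv φ c ≠ 0) (hgA : g =ᶠ[𝓝 c] A ∘ φ) :
    (fun z => dslope g c z / dslope φ c z) =ᶠ[𝓝 c] dslope A 0 ∘ φ := by
  have hφd : DifferentiableAt 𝕜 φ c := differentiableAt_of_deriv_ne_zero hφ'c
  have hgc : g c = A 0 := by simpa [hφc] using hgA.eq_of_nhds
  have hφne : ∀ᶠ z in 𝓝 c, z ≠ c → φ z ≠ 0 :=
    eventually_nhdsWithin_iff.mp (hφd.hasDerivAt.eventually_ne hφ'c)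
  filter_upwards [hgA, hφne] with z hgz hφz
  rcases eq_or_ne z c with rfl | hzc
  · rw [dslope_same, dslope_same, hgA.deriv_eq, Function.comp_apply, hφc, dslope_same,
      ← hφc, deriv_comp z (hφc ▸ hA) hφd, mul_div_cancel_right₀ _ hφ'c]
  · rw [Function.comp_apply, dslope_of_ne _ hzc, dslope_of_ne _ hzc, dslope_of_ne _ (hφz hzc),
      slope_def_field, slope_def_field, slope_def_field, hgz, hgc, hφc, sub_zero,
      Function.comp_apply, div_div_div_cancel_right₀ (sub_ne_zero.mpr hzc)]

end DSlope

section Residue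

variable {w c : ℂ} {R : ℝ} {f g φ A : ℂ → ℂ} {q : FormalMultilinearSeries ℂ ℂ ℂ}

lemma isExactOn_div_sub_sub_div_sub (hf : DifferentiableOn ℂ f (ball w R)) (hc : c ∈ ball w R) :
    IsExactOn (fun z => f z / (z - c) - f c / (z - c)) (ball w R \ {c}) := by
  obtain ⟨F, hF⟩ := ((Complex.differentiableOn_dslope (isOpen_ball.mem_nhds hc)).mpr
    hf).isExactOn_ball
  refine ⟨F, fun z hz => ?_⟩
  convert hF z hz.1 using 1
  rw [dslope_of_ne _ hz.2, slope_def_field, sub_div]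

lemma isExactOn_of_eq_add {f₁ f₂ : ℂ → ℂ} {U : Set ℂ} (h₁ : IsExactOn f₁ U) (h₂ : IsExactOn f₂ U)
    (hf : ∀ z ∈ U, f z = f₁ z + f₂ z) : IsExactOn f U := by
  obtain ⟨F₁, hF₁⟩ := h₁
  obtain ⟨F₂, hF₂⟩ := h₂
  exact ⟨F₁ + F₂, fun z hz => hf z hz ▸ (hF₁ z hz).add (hF₂ z hz)⟩

lemma isExactOn_const_mul_deriv_div_pow {U : Set ℂ} (hφ : ∀ z ∈ U, DifferentiableAt ℂ φ z)
    (hφ0 : ∀ z ∈ U, φ z ≠ 0) (a : ℂ) (n : ℕ) :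
    IsExactOn (fun z => a * deriv φ z / φ z ^ (n + 2)) U := by
  refine ⟨fun z => -a / (n + 1) * (φ z ^ (n + 1))⁻¹, fun z hz => ?_⟩
  have hz0 := hφ0 z hz
  refine ((((hφ z hz).hasDerivAt.pow (n + 1)).inv (pow_ne_zero _ hz0)).const_mul _).congr_deriv ?_
  have : (n : ℂ) + 1 ≠ 0 := n.cast_add_one_ne_zero
  simp only [Nat.add_sub_cancel, Nat.cast_add, Nat.cast_one, Pi.pow_apply]
  field_simp
  ring

theorem isExactOn_mul_deriv_div_pow_sub_residue (hc : c ∈ ball w R)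
    (hφ : DifferentiableOn ℂ φ (ball w R)) (hφc : φ c = 0) (hφ'c : deriv φ c ≠ 0)
    (hφ0 : ∀ z ∈ ball w R, z ≠ c → φ z ≠ 0) (n : ℕ) (hg : DifferentiableOn ℂ g (ball w R))
    (hA : HasFPowerSeriesAt A q 0) (hgA : g =ᶠ[𝓝 c] A ∘ φ) :
    IsExactOn (fun z => g z * deriv φ z / φ z ^ (n + 1) - q.coeff n / (z - c))
      (ball w R \ {c}) := by
  have hφ'0 : ∀ z ∈ ball w R, dslope φ c z ≠ 0 := fun z hz => dslope_ne_zero hφc hφ'c (hφ0 z hz)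
  have hds {f : ℂ → ℂ} (hf : DifferentiableOn ℂ f (ball w R)) :
      DifferentiableOn ℂ (dslope f c) (ball w R) :=
    (Complex.differentiableOn_dslope (isOpen_ball.mem_nhds hc)).mpr hf
  induction n generalizing g A q with
  | zero =>
    have hgc : g c = q.coeff 0 := by
      rw [hgA.eq_of_nhds, Function.comp_apply, hφc, FormalMultilinearSeries.coeff, hA.coeff_zero]
    obtain ⟨F, hF⟩ := isExactOn_div_sub_sub_div_sub
      ((hg.mul (hφ.deriv isOpen_ball)).div (hds hφ) hφ'0) hc
    refine ⟨F, fun z hz => (hF z hz).congr_deriv ?_⟩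
    simp only [Pi.div_apply, Pi.mul_apply]
    rw [dslope_same, mul_div_cancel_right₀ _ hφ'c, hgc, div_div, mul_comm (dslope φ c z),
      sub_mul_dslope_of_eq_zero hφc, zero_add, pow_one]
  | succ n ih =>
    rw [← FormalMultilinearSeries.coeff_fslope]
    refine isExactOn_of_eq_add (ih ((hds hg).div (hds hφ) hφ'0) hA.has_fpower_series_dslope_fslope
      (dslope_div_dslope_eventuallyEq hA.differentiableAt hφc hφ'c hgA))
      (isExactOn_const_mul_deriv_div_pow (U := ball w R \ {c})
        (fun z hz => hφ.differentiableAt (isOpen_ball.mem_nhds hz.1))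
        (fun z hz => hφ0 z hz.1 hz.2) (g c) n) fun z hz => ?_
    have hz0 := hφ0 z hz.1 hz.2
    have hgz : g z = g c + φ z * (dslope g c z / dslope φ c z) := by
      rw [← sub_mul_dslope_of_eq_zero hφc z, mul_assoc, mul_div_cancel₀ _ (hφ'0 z hz.1)]
      linear_combination -sub_smul_dslope g c z
    simp only [Pi.div_apply]
    rw [hgz]
    field_simp
    ring
end Residue

section Laplace

lemma isBigO_pow_pow_of_le {𝕜 : Type*} [NormedField 𝕜] {m n : ℕ} (h : m ≤ n) :
    (fun z : 𝕜 => z ^ n) =O[𝓝 0] fun z => z ^ m :=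
  h.eq_or_lt.elim (fun h => h ▸ isBigO_refl _ _) fun h => (isLittleO_pow_pow h).isBigO

lemma exists_forall_Ioc_norm_le_of_isBigO {E F : Type*} [NormedAddCommGroup E]
    [NormedAddCommGroup F] {g : ℝ → E} {φ : ℝ → F} {R : ℝ} (hg : ContinuousOn g (Set.Ioc 0 R))
    (hφ : ContinuousOn φ (Set.Ioc 0 R)) (hφ0 : ∀ r ∈ Set.Ioc 0 R, φ r ≠ 0)
    (hgφ : g =O[𝓝[>] 0] φ) : ∃ C > 0, ∀ r ∈ Set.Ioc 0 R, ‖g r‖ ≤ C * ‖φ r‖ := by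
  obtain ⟨C₀, hC₀, hnear⟩ := hgφ.exists_pos
  obtain ⟨ε, hε, hεC⟩ := mem_nhdsGT_iff_exists_Ioo_subset.mp hnear.bound
  have hsub : Set.Icc ε R ⊆ Set.Ioc 0 R := fun r hr => ⟨lt_of_lt_of_le hε hr.1, hr.2⟩
  obtain ⟨C₁, hC₁⟩ := isCompact_Icc.exists_bound_of_continuousOn
    ((hg.mono hsub).norm.div (hφ.mono hsub).norm fun r hr => norm_ne_zero_iff.mpr (hφ0 r (hsub hr)))
  refine ⟨max C₀ C₁, lt_max_of_lt_left hC₀, fun r hr => ?_⟩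
  rcases lt_or_ge r ε with hrε | hrε
  · exact (hεC ⟨hr.1, hrε⟩).trans (by gcongr; exact le_max_left _ _)
  · have := (Real.le_norm_self _).trans (hC₁ r ⟨hrε, hr.2⟩)
    rw [Pi.div_apply, div_le_iff₀ (norm_pos_iff.mpr (hφ0 r hr))] at this
    exact this.trans (by gcongr; exact le_max_right _ _)

lemma norm_pow_sub_pow_le {S : Type*} [NormedCommRing S] [NormOneClass S] {x y : S} {M : ℝ}
    (hx : ‖x‖ ≤ M) (hy : ‖y‖ ≤ M) (n : ℕ) :
    ‖x ^ n - y ^ n‖ ≤ n * M ^ (n - 1) * ‖x - y‖ := by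
  have hM : 0 ≤ M := (norm_nonneg x).trans hx
  rw [← geom_sum₂_mul]
  refine (norm_mul_le _ _).trans ?_
  gcongr
  refine (norm_sum_le_of_le (f := fun i => x ^ i * y ^ (n - 1 - i)) _
    (n := fun _ => M ^ (n - 1)) fun i hi => ?_).trans (by simp)
  have hi' : i ≤ n - 1 := Nat.le_sub_one_of_lt (Finset.mem_range.mp hi)
  calc ‖x ^ i * y ^ (n - 1 - i)‖ ≤ ‖x‖ ^ i * ‖y‖ ^ (n - 1 - i) :=
        (norm_mul_le _ _).trans (by gcongr <;> exact norm_pow_le _ _)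
    _ ≤ M ^ i * M ^ (n - 1 - i) := by gcongr
    _ = M ^ (n - 1) := by rw [← pow_add, Nat.add_sub_cancel' hi']

lemma integral_pow_mul_exp_neg_mul_pow (n : ℕ) {k : ℕ} (hk : k ≠ 0) {b : ℝ} (hb : 0 < b) :
    ∫ r in Set.Ioi (0 : ℝ), r ^ n * Real.exp (-b * r ^ k)
      = b ^ (-((n : ℝ) + 1) / k) * (1 / k) * Real.Gamma (((n : ℝ) + 1) / k) := by
  have := _root_.integral_rpow_mul_exp_neg_mul_rpow (p := k) (q := n) (b := b)
    (by positivity) (neg_one_lt_zero.trans_le n.cast_nonneg) hb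
  simpa only [Real.rpow_natCast] using this

lemma integrableOn_pow_mul_exp_neg_mul_pow (n : ℕ) {k : ℕ} (hk : k ≠ 0) {b : ℝ} (hb : 0 < b) :
    MeasureTheory.IntegrableOn (fun r : ℝ => r ^ n * Real.exp (-b * r ^ k)) (Set.Ioi 0) := by
  have := integrableOn_rpow_mul_exp_neg_mul_rpow (p := k) (s := n) (b := b)
    (neg_one_lt_zero.trans_le n.cast_nonneg) (by positivity) hb
  simpa only [Real.rpow_natCast] using this

variable {f x : ℝ → ℂ} {b R : ℝ} {j k : ℕ} {κ : ℂ}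

lemma exp_neg_mul_pow_sub_isBigO (hk : k ≠ 0) (b : ℝ) :
    (fun r : ℝ => (Real.exp (-b * r ^ k) : ℂ) - (1 - b * r ^ k))
      =O[𝓝[>] 0] fun r : ℝ => r ^ (k + 1) := by
  have hexp := (Real.exp_sub_sum_range_isBigO_pow 2).comp_tendsto
    (show Tendsto (fun r : ℝ => -b * r ^ k) (𝓝 0) (𝓝 0) from
      Continuous.tendsto' (by fun_prop) _ _ (by simp [hk]))
  have hpow : (fun r : ℝ => (-b * r ^ k) ^ 2) =O[𝓝 0] fun r : ℝ => r ^ (k + 1) := by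
    simp_rw [mul_pow, ← pow_mul]
    exact (isBigO_pow_pow_of_le (by omega)).const_mul_left _
  refine (IsBigO.of_norm_left ?_).mono nhdsWithin_le_nhds
  refine (hexp.trans hpow).norm_left.congr_left fun r => ?_
  have htaylor (y : ℝ) : ∑ i ∈ Finset.range 2, y ^ i / i.factorial = 1 + y := by
    simp [Finset.sum_range_succ]
  rw [← norm_real, Function.comp_apply, htaylor]
  push_cast
  ring_nf

lemma exists_norm_le_exp_neg_mul_pow (hk : k ≠ 0) (hb : 0 < b)
    (hx : ContinuousOn x (Set.Ioc 0 R)) (hlt : ∀ r ∈ Set.Ioc 0 R, ‖x r‖ < 1)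
    (hx0 : (fun r => x r - (1 - b * r ^ k)) =O[𝓝[>] 0] fun r : ℝ => r ^ (k + 1)) :
    ∃ δ > 0, ∀ r ∈ Set.Ioc 0 R, ‖x r‖ ≤ Real.exp (-δ * r ^ k) := by
  have hnear : (fun r : ℝ => r ^ k) =O[𝓝[>] 0] fun r => 1 - ‖x r‖ := by
    have hsmall : ∀ᶠ r : ℝ in 𝓝[>] 0, b * r ^ k ≤ 1 :=
      ((Continuous.tendsto' (by fun_prop) _ _ (by simp [hk]) :
        Tendsto (fun r : ℝ => b * r ^ k) (𝓝 0) (𝓝 0)).mono_left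
        nhdsWithin_le_nhds).eventually_le_const one_pos
    have herr := (hx0.trans_isLittleO ((isLittleO_pow_pow k.lt_succ_self).mono
      nhdsWithin_le_nhds)).bound (half_pos hb)
    refine IsBigO.of_bound (2 / b) ?_
    filter_upwards [hsmall, herr, self_mem_nhdsWithin] with r hr hxr hr0
    have hr0 : (0 : ℝ) < r := hr0
    have hmain : ‖(1 - b * r ^ k : ℂ)‖ = 1 - b * r ^ k := by
      rw [← Real.norm_of_nonneg (sub_nonneg.mpr hr), ← norm_real]; push_cast; rfl
    have htri := norm_le_norm_add_norm_sub' (x r) (1 - b * r ^ k)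
    rw [Real.norm_of_nonneg (by positivity)] at hxr ⊢
    rw [div_mul_eq_mul_div, le_div_iff₀ hb]
    linarith [Real.le_norm_self (1 - ‖x r‖)]
  obtain ⟨C, hC, hbound⟩ := exists_forall_Ioc_norm_le_of_isBigO (R := R) (by fun_prop)
    (φ := fun r => 1 - ‖x r‖) (continuousOn_const.sub hx.norm)
    (fun r hr => (sub_pos.mpr (hlt r hr)).ne') hnear
  refine ⟨C⁻¹, by positivity, fun r hr => ?_⟩
  have := hbound r hr
  rw [Real.norm_of_nonneg (pow_nonneg hr.1.le k),
    Real.norm_of_nonneg (sub_nonneg.mpr (hlt r hr).le), ← inv_mul_le_iff₀ hC] at this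
  calc ‖x r‖ ≤ 1 - C⁻¹ * r ^ k := by linarith
    _ ≤ Real.exp (-(C⁻¹ * r ^ k)) := Real.one_sub_le_exp_neg _
    _ = Real.exp (-C⁻¹ * r ^ k) := by rw [neg_mul]

lemma exp_neg_mul_natCast_mul (c r : ℝ) (p k : ℕ) :
    Real.exp (-(c * p) * r ^ k) = Real.exp (-c * r ^ k) ^ p := by
  rw [← Real.exp_nat_mul]; congr 1; ring

lemma natCast_mul_exp_pow_sub_one_le {δ r : ℝ} (hδ : 0 ≤ δ) (hr : r ∈ Set.Ioc 0 R) (k p : ℕ) :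
    p * Real.exp (-δ * r ^ k) ^ (p - 1)
      ≤ Real.exp (δ * R ^ k) * p * Real.exp (-(δ * p) * r ^ k) := by
  rcases p with _ | n
  · simp
  have hrR : 1 ≤ Real.exp (δ * R ^ k) * Real.exp (-δ * r ^ k) := by
    have : r ^ k ≤ R ^ k := pow_le_pow_left₀ hr.1.le hr.2 k
    rw [← Real.exp_add, Real.one_le_exp_iff]
    nlinarith
  calc ((n + 1 : ℕ) : ℝ) * Real.exp (-δ * r ^ k) ^ n
      ≤ (Real.exp (δ * R ^ k) * Real.exp (-δ * r ^ k))
          * ((n + 1 : ℕ) * Real.exp (-δ * r ^ k) ^ n) :=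
        le_mul_of_one_le_left (by positivity) hrR
    _ = _ := by rw [exp_neg_mul_natCast_mul, pow_succ]; ring

lemma exists_norm_pow_sub_exp_le (hk : k ≠ 0) (hb : 0 < b) (hx : ContinuousOn x (Set.Ioc 0 R))
    (hlt : ∀ r ∈ Set.Ioc 0 R, ‖x r‖ < 1)
    (hx0 : (fun r => x r - (1 - b * r ^ k)) =O[𝓝[>] 0] fun r : ℝ => r ^ (k + 1)) :
    ∃ δ > 0, δ ≤ b ∧ (∀ r ∈ Set.Ioc 0 R, ‖x r‖ ≤ Real.exp (-δ * r ^ k)) ∧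
      ∃ C > 0, ∀ p : ℕ, ∀ r ∈ Set.Ioc 0 R, ‖x r ^ p - (Real.exp (-(b * p) * r ^ k) : ℂ)‖
        ≤ C * (p * r ^ (k + 1)) * Real.exp (-(δ * p) * r ^ k) := by
  obtain ⟨δ₀, hδ₀, hxδ₀⟩ := exists_norm_le_exp_neg_mul_pow hk hb hx hlt hx0
  obtain ⟨C, hC, hxC⟩ := exists_forall_Ioc_norm_le_of_isBigO (R := R)
    (g := fun r => x r - (Real.exp (-b * r ^ k) : ℂ))
    (φ := fun r => r ^ (k + 1)) (hx.sub (by fun_prop)) (by fun_prop)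
    (fun r hr => pow_ne_zero _ hr.1.ne')
    ((hx0.sub (exp_neg_mul_pow_sub_isBigO hk b)).congr_left fun r => by ring)
  set δ := min δ₀ b
  have hδ : 0 < δ := lt_min hδ₀ hb
  have hexp_le {c r : ℝ} (hc : δ ≤ c) (hr : r ∈ Set.Ioc 0 R) :
      Real.exp (-c * r ^ k) ≤ Real.exp (-δ * r ^ k) := by
    have := hr.1; gcongr
  have hxδ : ∀ r ∈ Set.Ioc 0 R, ‖x r‖ ≤ Real.exp (-δ * r ^ k) := fun r hr =>
    (hxδ₀ r hr).trans (hexp_le (min_le_left _ _) hr)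
  refine ⟨δ, hδ, min_le_right _ _, hxδ, C * Real.exp (δ * R ^ k), by positivity,
    fun p r hr => ?_⟩
  have hr0 : 0 < r := hr.1
  have hyδ : ‖(Real.exp (-b * r ^ k) : ℂ)‖ ≤ Real.exp (-δ * r ^ k) := by
    rw [norm_real, Real.norm_of_nonneg (Real.exp_nonneg _)]
    exact hexp_le (min_le_right _ _) hr
  have hxCr := hxC r hr
  rw [Real.norm_of_nonneg (by positivity)] at hxCr
  calc ‖x r ^ p - (Real.exp (-(b * p) * r ^ k) : ℂ)‖
      ≤ p * Real.exp (-δ * r ^ k) ^ (p - 1) * ‖x r - (Real.exp (-b * r ^ k) : ℂ)‖ := by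
        rw [exp_neg_mul_natCast_mul, ofReal_pow]
        exact norm_pow_sub_pow_le (hxδ r hr) hyδ p
    _ ≤ (Real.exp (δ * R ^ k) * p * Real.exp (-(δ * p) * r ^ k)) * (C * r ^ (k + 1)) := by
        exact mul_le_mul (natCast_mul_exp_pow_sub_one_le hδ.le hr k p) hxCr (norm_nonneg _)
          (by positivity)
    _ = _ := by ring

lemma exists_norm_mul_pow_sub_le (hk : k ≠ 0) (hb : 0 < b)
    (hf : ContinuousOn f (Set.Ioc 0 R)) (hx : ContinuousOn x (Set.Ioc 0 R))
    (hlt : ∀ r ∈ Set.Ioc 0 R, ‖x r‖ < 1)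
    (hf0 : (fun r => f r - κ * r ^ j) =O[𝓝[>] 0] fun r : ℝ => r ^ (j + 1))
    (hx0 : (fun r => x r - (1 - b * r ^ k)) =O[𝓝[>] 0] fun r : ℝ => r ^ (k + 1)) :
    ∃ δ > 0, δ ≤ b ∧ ∃ C > 0, ∀ p : ℕ, ∀ r ∈ Set.Ioc 0 R,
      ‖f r * x r ^ p - κ * (r ^ j * Real.exp (-(b * p) * r ^ k) : ℝ)‖
        ≤ C * (r ^ (j + 1) + p * r ^ (j + k + 1)) * Real.exp (-(δ * p) * r ^ k) := by
  obtain ⟨δ, hδ, hδb, hxδ, C₁, hC₁, hpow⟩ := exists_norm_pow_sub_exp_le hk hb hx hlt hx0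
  obtain ⟨C₂, hC₂, hfC⟩ := exists_forall_Ioc_norm_le_of_isBigO (R := R)
    (g := fun r => f r - κ * r ^ j) (hf.sub (by fun_prop)) (by fun_prop)
    (fun r hr => pow_ne_zero _ hr.1.ne') hf0
  refine ⟨δ, hδ, hδb, C₂ + ‖κ‖ * C₁, by positivity, fun p r hr => ?_⟩
  have hr0 : 0 < r := hr.1
  have hfr := hfC r hr
  rw [Real.norm_of_nonneg (by positivity)] at hfr
  have hxp : ‖x r ^ p‖ ≤ Real.exp (-(δ * p) * r ^ k) := by
    rw [norm_pow, exp_neg_mul_natCast_mul]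
    exact pow_le_pow_left₀ (norm_nonneg _) (hxδ r hr) p
  set E := Real.exp (-(δ * p) * r ^ k)
  calc ‖f r * x r ^ p - κ * (r ^ j * Real.exp (-(b * p) * r ^ k) : ℝ)‖
      = ‖(f r - κ * r ^ j) * x r ^ p
          + κ * r ^ j * (x r ^ p - (Real.exp (-(b * p) * r ^ k) : ℂ))‖ := by
        push_cast; congr 1; ring
    _ ≤ C₂ * r ^ (j + 1) * E + ‖κ‖ * r ^ j * (C₁ * (p * r ^ (k + 1)) * E) := by
        refine norm_add_le_of_le (norm_mul_le_of_le hfr hxp) (norm_mul_le_of_le ?_ (hpow p r hr))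
        rw [norm_mul, norm_pow, norm_real, Real.norm_of_nonneg hr0.le]
    _ = (C₂ * r ^ (j + 1) + ‖κ‖ * C₁ * (p * r ^ (j + k + 1))) * E := by ring
    _ ≤ (C₂ + ‖κ‖ * C₁) * (r ^ (j + 1) + p * r ^ (j + k + 1)) * E := by
        have h₁ : 0 ≤ C₂ * (p * r ^ (j + k + 1)) := by positivity
        have h₂ : 0 ≤ ‖κ‖ * C₁ * r ^ (j + 1) := by positivity
        gcongr
        linarith

lemma exists_norm_indicator_mul_pow_sub_le (hk : k ≠ 0) (hb : 0 < b) (hR : 0 < R)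
    (hf : ContinuousOn f (Set.Ioc 0 R)) (hx : ContinuousOn x (Set.Ioc 0 R))
    (hlt : ∀ r ∈ Set.Ioc 0 R, ‖x r‖ < 1)
    (hf0 : (fun r => f r - κ * r ^ j) =O[𝓝[>] 0] fun r : ℝ => r ^ (j + 1))
    (hx0 : (fun r => x r - (1 - b * r ^ k)) =O[𝓝[>] 0] fun r : ℝ => r ^ (k + 1)) :
    ∃ δ > 0, ∃ C, ∀ p : ℕ, ∀ r ∈ Set.Ioi (0 : ℝ),
      ‖(Set.Ioc 0 R).indicator (fun r => f r * x r ^ p) r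
          - κ * (r ^ j * Real.exp (-(b * p) * r ^ k) : ℝ)‖
        ≤ C * (r ^ (j + 1) + p * r ^ (j + k + 1)) * Real.exp (-(δ * p) * r ^ k) := by
  obtain ⟨δ, hδ, hδb, C, hC, hIoc⟩ := exists_norm_mul_pow_sub_le hk hb hf hx hlt hf0 hx0
  refine ⟨δ, hδ, max C (‖κ‖ / R), fun p r hr => ?_⟩
  have hr0 : 0 < r := hr
  rcases le_or_gt r R with hrR | hrR
  · rw [Set.indicator_of_mem (Set.mem_Ioc.mpr ⟨hr, hrR⟩)]
    refine (hIoc p r ⟨hr, hrR⟩).trans ?_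
    gcongr
    exact le_max_left _ _
  · rw [Set.indicator_of_notMem fun h => hrR.not_ge h.2, zero_sub, norm_neg, norm_mul, norm_real,
      Real.norm_of_nonneg (by positivity)]
    calc ‖κ‖ * (r ^ j * Real.exp (-(b * p) * r ^ k))
        = ‖κ‖ / R * (r ^ j * R) * Real.exp (-(b * p) * r ^ k) := by field_simp
      _ ≤ max C (‖κ‖ / R) * (r ^ (j + 1) + p * r ^ (j + k + 1))
          * Real.exp (-(δ * p) * r ^ k) := by
        gcongr
        · exact le_max_right _ _
        · exact le_add_of_le_of_nonneg (by rw [pow_succ]; gcongr) (by positivity)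

lemma integral_error_bound_isBigO (hk : k ≠ 0) {δ : ℝ} (hδ : 0 < δ) (C : ℝ) (j : ℕ) :
    (fun p : ℕ => ∫ r in Set.Ioi (0 : ℝ),
      C * (r ^ (j + 1) + p * r ^ (j + k + 1)) * Real.exp (-(δ * p) * r ^ k))
      =O[atTop] fun p : ℕ => (p : ℝ) ^ (-((j : ℝ) + 2) / k) := by
  have hk0 : (k : ℝ) ≠ 0 := Nat.cast_ne_zero.mpr hk
  set c : ℕ → ℝ := fun n => δ ^ (-((n : ℝ) + 1) / k) * (1 / k) * Real.Gamma (((n : ℝ) + 1) / k)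
  have hmoment (n : ℕ) {p : ℕ} (hp : 0 < p) :
      ∫ r in Set.Ioi (0 : ℝ), r ^ n * Real.exp (-(δ * p) * r ^ k)
        = c n * (p : ℝ) ^ (-((n : ℝ) + 1) / k) := by
    rw [integral_pow_mul_exp_neg_mul_pow n hk (by positivity),
      Real.mul_rpow hδ.le (by positivity)]
    ring
  refine IsBigO.congr' (isBigO_const_mul_self (C * (c (j + 1) + c (j + k + 1))) _ atTop) ?_ .rfl
  filter_upwards [eventually_gt_atTop 0] with p hp
  have hp0 : (0 : ℝ) < p := Nat.cast_pos.mpr hp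
  have hint (n : ℕ) := integrableOn_pow_mul_exp_neg_mul_pow n hk (mul_pos hδ hp0)
  simp_rw [mul_assoc C, add_mul, mul_assoc (p : ℝ)]
  rw [MeasureTheory.integral_const_mul, MeasureTheory.integral_add (hint _) ((hint _).const_mul _),
    MeasureTheory.integral_const_mul, hmoment _ hp, hmoment _ hp]
  have hpow : (p : ℝ) * (p : ℝ) ^ (-(((j + k + 1 : ℕ) : ℝ) + 1) / k)
      = (p : ℝ) ^ (-((j : ℝ) + 2) / k) := by
    nth_rw 1 [← Real.rpow_one (p : ℝ)]
    rw [← Real.rpow_add hp0]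
    congr 1
    push_cast
    field_simp
    ring
  have hj : (((j + 1 : ℕ) : ℝ) + 1) = j + 2 := by push_cast; ring
  rw [mul_left_comm (p : ℝ), hpow, hj]

theorem intervalIntegral_mul_pow_sub_isBigO (hk : k ≠ 0) (hb : 0 < b) (hR : 0 < R)
    (hf : ContinuousOn f (Set.Icc 0 R)) (hx : ContinuousOn x (Set.Icc 0 R))
    (hlt : ∀ r ∈ Set.Ioc 0 R, ‖x r‖ < 1)
    (hf0 : (fun r => f r - κ * r ^ j) =O[𝓝[>] 0] fun r : ℝ => r ^ (j + 1))
    (hx0 : (fun r => x r - (1 - b * r ^ k)) =O[𝓝[>] 0] fun r : ℝ => r ^ (k + 1)) :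
    (fun p : ℕ => (∫ r in (0 : ℝ)..R, f r * x r ^ p)
        - κ * ((b * p) ^ (-((j : ℝ) + 1) / k) * (1 / k) * Real.Gamma (((j : ℝ) + 1) / k) : ℝ))
      =O[atTop] fun p : ℕ => (p : ℝ) ^ (-((j : ℝ) + 2) / k) := by
  obtain ⟨δ, hδ, C, hbound⟩ := exists_norm_indicator_mul_pow_sub_le hk hb hR
    (hf.mono Set.Ioc_subset_Icc_self) (hx.mono Set.Ioc_subset_Icc_self) hlt hf0 hx0
  refine IsBigO.trans (IsBigO.of_norm_eventuallyLE ?_) (integral_error_bound_isBigO hk hδ C j)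
  filter_upwards [eventually_gt_atTop 0] with p hp
  have hp0 : (0 : ℝ) < p := Nat.cast_pos.mpr hp
  have hint (n : ℕ) {b : ℝ} (hb : 0 < b) := integrableOn_pow_mul_exp_neg_mul_pow n hk
    (mul_pos hb hp0)
  have hfx : MeasureTheory.IntegrableOn (fun r => f r * x r ^ p) (Set.Ioc 0 R) :=
    ((hf.mul (hx.pow p)).integrableOn_Icc).mono_set Set.Ioc_subset_Icc_self
  rw [← integral_pow_mul_exp_neg_mul_pow j hk (by positivity), ← integral_complex_ofReal,
    ← MeasureTheory.integral_const_mul, intervalIntegral.integral_of_le hR.le,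
    ← Set.inter_eq_self_of_subset_right (Set.Ioc_subset_Ioi_self : Set.Ioc 0 R ⊆ Set.Ioi 0),
    ← MeasureTheory.setIntegral_indicator measurableSet_Ioc, ← MeasureTheory.integral_sub]
  · refine MeasureTheory.norm_integral_le_of_norm_le ?_
      ((MeasureTheory.ae_restrict_mem measurableSet_Ioi).mono (hbound p))
    simp_rw [mul_assoc C, add_mul, mul_assoc (p : ℝ)]
    exact ((hint _ hδ).add ((hint _ hδ).const_mul _)).const_mul _
  · exact (hfx.integrable_indicator measurableSet_Ioc).integrableOn
  · exact (hint j hb).ofReal.const_mul κ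

end Laplace

/-- The integral of `f` along the oriented segment from `a` to `b`. -/
noncomputable def segmentIntegral (f : ℂ → ℂ) (a b : ℂ) : ℂ :=
  (b - a) * ∫ t in (0 : ℝ)..1, f (a + t • (b - a))

section SegmentIntegral

variable {f F : ℂ → ℂ} {a b c d κ : ℂ} {U : Set ℂ}

lemma add_smul_sub_mem_segment {t : ℝ} (ht : t ∈ Set.Icc 0 1) :
    a + t • (b - a) ∈ segment ℝ a b :=
  (convex_segment a b).add_smul_sub_mem (left_mem_segment ..) (right_mem_segment ..) ht

lemma continuousOn_comp_segment (hf : ContinuousOn f (segment ℝ a b)) :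
    ContinuousOn (fun t : ℝ => f (a + t • (b - a))) (Set.Icc 0 1) :=
  hf.comp (by fun_prop) fun _ ht => add_smul_sub_mem_segment ht

lemma segmentIntegral_eq_sub (hf : ContinuousOn f (segment ℝ a b))
    (hF : ∀ z ∈ segment ℝ a b, HasDerivAt F (f z) z) :
    segmentIntegral f a b = F b - F a := by
  have := intervalIntegral.integral_unitInterval_deriv_eq_sub (z₁ := b - a)
    (continuousOn_comp_segment hf)
    fun t ht => hF _ (add_smul_sub_mem_segment ht)
  simpa [segmentIntegral] using this

lemma segmentIntegral_sub {g : ℂ → ℂ} (hf : ContinuousOn f (segment ℝ a b))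
    (hg : ContinuousOn g (segment ℝ a b)) :
    segmentIntegral (f - g) a b = segmentIntegral f a b - segmentIntegral g a b := by
  simp only [segmentIntegral, Pi.sub_apply]
  rw [intervalIntegral.integral_sub, mul_sub]
  · exact (continuousOn_comp_segment hf).intervalIntegrable_of_Icc zero_le_one
  · exact (continuousOn_comp_segment hg).intervalIntegrable_of_Icc zero_le_one

lemma segmentIntegral_symm (f : ℂ → ℂ) (a b : ℂ) :
    segmentIntegral f b a = -segmentIntegral f a b := by
  have hcomp : ∀ t : ℝ, f (b + t • (a - b)) = f (a + (1 - t) • (b - a)) := fun t => by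
    congr 1; simp only [real_smul]; push_cast; ring
  rw [segmentIntegral, segmentIntegral]
  simp_rw [hcomp]
  rw [intervalIntegral.integral_comp_sub_left (fun t => f (a + t • (b - a))) 1]
  norm_num
  ring

lemma div_sub_mem_slitPlane (h : (b - c) / (a - c) ∈ slitPlane) {z : ℂ}
    (hz : z ∈ segment ℝ a b) : (z - c) / (a - c) ∈ slitPlane := by
  have hac : a - c ≠ 0 := fun h0 => by simp [h0] at h
  rw [segment_eq_image'] at hz
  obtain ⟨t, ht, rfl⟩ := hz
  have := starConvex_one_slitPlane.add_smul_mem (y := (b - c) / (a - c) - 1)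
    (by simpa using h) ht.1 ht.2
  convert this using 1
  simp only [real_smul]
  field_simp
  ring

lemma segmentIntegral_div_sub (h : (b - c) / (a - c) ∈ slitPlane) (κ : ℂ) :
    segmentIntegral (fun z => κ / (z - c)) a b = κ * log ((b - c) / (a - c)) := by
  have hac : a - c ≠ 0 := fun h0 => by simp [h0] at h
  have hne : ∀ z ∈ segment ℝ a b, z - c ≠ 0 := fun z hz h0 => by
    simpa [h0] using div_sub_mem_slitPlane h hz
  rw [segmentIntegral_eq_sub (F := fun z => κ * log ((z - c) / (a - c)))]
  · rw [div_self hac, log_one, mul_zero, sub_zero]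
  · exact continuousOn_const.div (by fun_prop) hne
  · intro z hz
    have := hne z hz
    refine (((((hasDerivAt_id z).sub_const c).div_const (a - c)).clog
      (div_sub_mem_slitPlane h hz)).const_mul κ).congr_deriv ?_
    simp only [id_eq]
    field_simp

lemma log_add_log_add_log_eq_two_pi_mul_I {x y z : ℂ} (hx : 0 < x.im) (hy : 0 < y.im)
    (hz : 0 < z.im) (hxyz : x * y * z = 1) : log x + log y + log z = 2 * Real.pi * I := by
  have ne_zero {x : ℂ} (hx : 0 < x.im) : x ≠ 0 := fun h0 => by simp [h0] at hx
  obtain ⟨n, hn⟩ : ∃ n : ℤ, log x + log y + log z = n * (2 * Real.pi * I) := by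
    rw [← exp_eq_one_iff, exp_add, exp_add, exp_log (ne_zero hx), exp_log (ne_zero hy),
      exp_log (ne_zero hz), hxyz]
  have harg {x : ℂ} (hx : 0 < x.im) : 0 < arg x ∧ arg x < Real.pi :=
    ⟨(arg_nonneg_iff.mpr hx.le).lt_of_ne' fun h => hx.ne' (arg_eq_zero_iff.mp h).2,
      arg_lt_pi_iff.mpr (.inr hx.ne')⟩
  have him : arg x + arg y + arg z = n * (2 * Real.pi) := by
    simpa [log_im] using congrArg im hn
  have hn1 : n = 1 := by
    have hpos : (0 : ℝ) < n := by
      by_contra! h; nlinarith [harg hx, harg hy, harg hz, Real.pi_pos]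
    have hlt : (n : ℝ) < 2 := by
      by_contra! h; nlinarith [harg hx, harg hy, harg hz, Real.pi_pos]
    have : 0 < n := by exact_mod_cast hpos
    have : n < 2 := by exact_mod_cast hlt
    omega
  rw [hn, hn1, Int.cast_one, one_mul]

lemma segmentIntegral_eq_of_isExactOn_sub (hU : Convex ℝ U) (ha : a ∈ U) (hb : b ∈ U)
    (hf : ContinuousOn f (U \ {c})) (hF : ∀ z ∈ U \ {c}, HasDerivAt F (f z - κ / (z - c)) z)
    (h : (b - c) / (a - c) ∈ slitPlane) :
    segmentIntegral f a b = F b - F a + κ * log ((b - c) / (a - c)) := by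
  have hsub : segment ℝ a b ⊆ U \ {c} := fun z hz => ⟨hU.segment_subset ha hb hz, fun hzc => by
    rw [Set.mem_singleton_iff] at hzc
    simpa [hzc] using div_sub_mem_slitPlane h hz⟩
  have hpole : ContinuousOn (fun z => κ / (z - c)) (segment ℝ a b) :=
    continuousOn_const.div (by fun_prop) fun z hz => sub_ne_zero.mpr (hsub hz).2
  rw [← segmentIntegral_eq_sub ((hf.mono hsub).sub hpole) fun z hz => hF z (hsub hz),
    segmentIntegral_sub (hf.mono hsub) hpole, segmentIntegral_div_sub h, sub_add_cancel]

/-- The three conditions on imaginary parts say that the triangle winds once around `c`,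
counterclockwise. -/
theorem segmentIntegral_triangle_eq_residue (hU : Convex ℝ U) (ha : a ∈ U) (hb : b ∈ U)
    (hd : d ∈ U) (hf : ContinuousOn f (U \ {c}))
    (hexact : IsExactOn (fun z => f z - κ / (z - c)) (U \ {c}))
    (hab : 0 < ((b - c) / (a - c)).im) (hbd : 0 < ((d - c) / (b - c)).im)
    (hda : 0 < ((a - c) / (d - c)).im) :
    segmentIntegral f a b + segmentIntegral f b d + segmentIntegral f d a
      = 2 * Real.pi * I * κ := by
  obtain ⟨F, hF⟩ := hexact
  have hslit {x : ℂ} (hx : 0 < x.im) : x ∈ slitPlane := .inr hx.ne'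
  have hac : a - c ≠ 0 := fun h0 => by simp [h0] at hab
  have hbc : b - c ≠ 0 := fun h0 => by simp [h0] at hbd
  have hdc : d - c ≠ 0 := fun h0 => by simp [h0] at hda
  rw [segmentIntegral_eq_of_isExactOn_sub hU ha hb hf hF (hslit hab),
    segmentIntegral_eq_of_isExactOn_sub hU hb hd hf hF (hslit hbd),
    segmentIntegral_eq_of_isExactOn_sub hU hd ha hf hF (hslit hda),
    ← log_add_log_add_log_eq_two_pi_mul_I hab hbd hda (by field_simp)]
  ring

end SegmentIntegral

lemma pow_mul_sub_isBigO {𝕜 : Type*} [NontriviallyNormedField 𝕜] {K : 𝕜 → 𝕜}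
    (hK : DifferentiableAt 𝕜 K 0) (n : ℕ) :
    (fun z => z ^ n * K z - K 0 * z ^ n) =O[𝓝 0] fun z => z ^ (n + 1) := by
  have hsub : (fun z => K z - K 0) =O[𝓝 0] fun z => z := by simpa using hK.isBigO_sub
  exact ((isBigO_refl (fun z : 𝕜 => z ^ n) _).mul hsub).congr (fun z => by ring)
    fun z => (pow_succ z n).symm

section SegmentAsymptotics

variable {f x : ℂ → ℂ} {a b : ℂ}

theorem segmentIntegral_mul_pow_sub_isBigO {e κ β : ℂ} {B : ℝ} {j k : ℕ} (hk : k ≠ 0)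
    (hB : 0 < B) (heB : β * e ^ k = B) (hf : ContinuousOn f (segment ℝ 0 e))
    (hx : ContinuousOn x (segment ℝ 0 e)) (hlt : ∀ z ∈ segment ℝ 0 e, z ≠ 0 → ‖x z‖ < 1)
    (hf0 : (fun z => f z - κ * z ^ j) =O[𝓝 0] fun z => z ^ (j + 1))
    (hx0 : (fun z => x z - (1 - β * z ^ k)) =O[𝓝 0] fun z => z ^ (k + 1)) :
    (fun p : ℕ => segmentIntegral (fun z => f z * x z ^ p) 0 e - κ * e ^ (j + 1) *
        ((B * p) ^ (-((j : ℝ) + 1) / k) * (1 / k) * Real.Gamma (((j : ℝ) + 1) / k) : ℝ))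
      =O[atTop] fun p : ℕ => (p : ℝ) ^ (-((j : ℝ) + 2) / k) := by
  have he : e ≠ 0 := by
    rintro rfl
    exact hB.ne' (by simpa [hk] using heB.symm)
  have hseg : ∀ t ∈ Set.Icc (0 : ℝ) 1, t * e ∈ segment ℝ 0 e := fun t ht => by
    simpa using add_smul_sub_mem_segment (a := 0) (b := e) ht
  have htend : Tendsto (fun t : ℝ => t * e) (𝓝[>] 0) (𝓝 0) :=
    (Continuous.tendsto' (by fun_prop) _ _ (by simp)).mono_left nhdsWithin_le_nhds
  have hray (n : ℕ) : (fun t : ℝ => (t * e) ^ n) =O[𝓝[>] 0] fun t : ℝ => t ^ n :=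
    IsBigO.of_bound (‖e‖ ^ n) (.of_forall fun t => by simp [mul_pow, mul_comm])
  have hlap := intervalIntegral_mul_pow_sub_isBigO (f := fun t => f (t * e))
    (x := fun t => x (t * e)) (κ := κ * e ^ j) hk hB one_pos
    (hf.comp (by fun_prop) hseg) (hx.comp (by fun_prop) hseg)
    (fun t ht => hlt _ (hseg t ⟨ht.1.le, ht.2⟩)
      (mul_ne_zero (ofReal_ne_zero.mpr ht.1.ne') he))
    (((hf0.comp_tendsto htend).trans (hray _)).congr_left fun t => by
      simp only [Function.comp_apply]; ring)
    (((hx0.comp_tendsto htend).trans (hray _)).congr_left fun t => by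
      simp only [Function.comp_apply, ← heB]; ring)
  refine (hlap.const_mul_left e).congr_left fun p => ?_
  simp only [segmentIntegral, sub_zero, zero_add, real_smul]
  ring

lemma pow_isBigO_rpow {q : ℝ} (hq0 : 0 < q) (hq1 : q < 1) (s : ℝ) :
    (fun p : ℕ => q ^ p) =O[atTop] fun p : ℕ => (p : ℝ) ^ s := by
  refine ((isLittleO_exp_neg_mul_rpow_atTop (neg_pos.mpr (Real.log_neg hq0 hq1))
    s).isBigO.comp_tendsto tendsto_natCast_atTop_atTop).congr_left fun p => ?_
  rw [Function.comp_apply, neg_neg, mul_comm, Real.exp_nat_mul, Real.exp_log hq0]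

lemma exists_norm_le_lt_one_of_isCompact {X E : Type*} [TopologicalSpace X]
    [SeminormedAddCommGroup E] {g : X → E} {s : Set X} (hs : IsCompact s) (hg : ContinuousOn g s)
    (hlt : ∀ z ∈ s, ‖g z‖ < 1) : ∃ q, 0 < q ∧ q < 1 ∧ ∀ z ∈ s, ‖g z‖ ≤ q := by
  rcases s.eq_empty_or_nonempty with rfl | hne
  · exact ⟨1 / 2, by norm_num, by norm_num, by simp⟩
  obtain ⟨z₀, hz₀, hmax⟩ := hs.exists_isMaxOn hne hg.norm
  exact ⟨max ‖g z₀‖ (1 / 2), by positivity, max_lt (hlt z₀ hz₀) (by norm_num),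
    fun z hz => (hmax hz).trans (le_max_left _ _)⟩

theorem segmentIntegral_mul_pow_isBigO (hf : ContinuousOn f (segment ℝ a b))
    (hx : ContinuousOn x (segment ℝ a b)) (hlt : ∀ z ∈ segment ℝ a b, ‖x z‖ < 1) (s : ℝ) :
    (fun p : ℕ => segmentIntegral (fun z => f z * x z ^ p) a b)
      =O[atTop] fun p : ℕ => (p : ℝ) ^ s := by
  have hcompact : IsCompact (segment ℝ a b) := by
    rw [segment_eq_image']; exact isCompact_Icc.image (by fun_prop)
  obtain ⟨C, hC⟩ := hcompact.exists_bound_of_continuousOn hf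
  obtain ⟨q, hq0, hq1, hq⟩ := exists_norm_le_lt_one_of_isCompact hcompact hx hlt
  refine IsBigO.trans (IsBigO.of_bound (‖b - a‖ * C) (.of_forall fun p => ?_))
    (pow_isBigO_rpow hq0 hq1 s)
  rw [segmentIntegral, norm_mul, mul_assoc, Real.norm_of_nonneg (by positivity)]
  gcongr
  refine (intervalIntegral.norm_integral_le_of_norm_le_const fun t ht => ?_).trans_eq
    (by rw [sub_zero, abs_one, mul_one])
  have hz : a + t • (b - a) ∈ segment ℝ a b := by
    rw [Set.uIoc_of_le zero_le_one] at ht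
    exact add_smul_sub_mem_segment ⟨ht.1.le, ht.2⟩
  rw [norm_mul, norm_pow]
  have hCz := hC _ hz
  gcongr
  · exact (norm_nonneg _).trans hCz
  · exact hq _ hz

end SegmentAsymptotics

/-- The multiplicative constant of `Ahat`. -/
noncomputable def ampl : ℝ := (1 / 10) * ((3 : ℝ) / 2) ^ ((7 : ℝ) / 3)

/-- The normalized variable `û / u_c` in the local coordinate `h = 1 - H`. -/
noncomputable def localU (h : ℂ) : ℂ := 1 - h ^ 3 * (2 + h) / 3

/-- `Ahat` in the local coordinate `h = 1 - H`. -/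
noncomputable def localA (h : ℂ) : ℂ := ampl * ((4 + 2 * h + 3 * h ^ 2) / (1 + h + h ^ 2) ^ 2)

/-- A disk around the contour on which `localA` is holomorphic and `1` is the only zero of
`localU`. -/
def disk : Set ℂ := ball 4 (17 / 4)

lemma uhat_one_sub (h : ℂ) : uhat (1 - h) = uc * localU h := by
  unfold uhat localU; ring

lemma Ahat_one_sub (h : ℂ) : Ahat (1 - h) = localA h := by
  unfold Ahat localA ampl
  rw [show 9 - 8 * (1 - h) + 3 * (1 - h) ^ 2 = 4 + 2 * h + 3 * h ^ 2 by ring,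
    show 3 - 3 * (1 - h) + (1 - h) ^ 2 = 1 + h + h ^ 2 by ring]
  push_cast
  ring

lemma mem_disk_iff {h : ℂ} : h ∈ disk ↔ (h.re - 4) ^ 2 + h.im ^ 2 < (17 / 4) ^ 2 := by
  rw [disk, mem_ball, dist_eq, ← sq_lt_sq₀ (norm_nonneg _) (by norm_num), Complex.sq_norm,
    normSq_apply]
  simp [sq]

lemma neg_quarter_lt_re {h : ℂ} (hh : h ∈ disk) : -1 / 4 < h.re := by
  rw [mem_disk_iff] at hh
  nlinarith [sq_nonneg h.im]

lemma quadratic_ne_zero {h : ℂ} (hh : h ∈ disk) : 1 + h + h ^ 2 ≠ 0 := by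
  have hre := neg_quarter_lt_re hh
  intro h0
  have hre0 : 1 + h.re + (h.re ^ 2 - h.im ^ 2) = 0 := by
    simpa [sq] using congrArg Complex.re h0
  have him0 : h.im * (1 + 2 * h.re) = 0 := by
    have := congrArg Complex.im h0
    simp only [sq, add_im, one_im, mul_im, zero_im] at this
    linarith
  have him : h.im = 0 := (mul_eq_zero.mp him0).resolve_right (by linarith)
  rw [him] at hre0
  nlinarith [sq_nonneg (h.re + 1 / 2)]

/-- The polynomial equals `(h + 1) ^ 3 + 2`, whose roots satisfy `h.re ≤ -1 + 2 ^ (1 / 3) / 2`. -/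
lemma cubic_ne_zero {h : ℂ} (hh : h ∈ disk) : h ^ 3 + 3 * h ^ 2 + 3 * h + 3 ≠ 0 := by
  have hre := neg_quarter_lt_re hh
  intro h0
  obtain ⟨x, y⟩ := h
  have hre0 : (x + 1) ^ 3 - 3 * (x + 1) * y ^ 2 + 2 = 0 := by
    refine Eq.trans ?_ (congrArg Complex.re h0); simp [pow_succ]; ring
  have him0 : y * (3 * (x + 1) ^ 2 - y ^ 2) = 0 := by
    refine Eq.trans ?_ (congrArg Complex.im h0); simp [pow_succ]; ring
  replace hre : 3 / 4 < x + 1 := by linarith [show -1 / 4 < x from hre]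
  rcases mul_eq_zero.mp him0 with rfl | hy
  · nlinarith [pow_pos (show 0 < x + 1 by linarith) 3]
  · have hcube : (3 / 4 : ℝ) ^ 3 < (x + 1) ^ 3 := by gcongr
    rw [show y ^ 2 = 3 * (x + 1) ^ 2 by linarith] at hre0
    nlinarith

lemma localU_eq_mul (h : ℂ) : localU h = (1 - h) * ((h ^ 3 + 3 * h ^ 2 + 3 * h + 3) / 3) := by
  unfold localU; ring

lemma localU_zero : localU 0 = 1 := by simp [localU]

lemma localU_one : localU 1 = 0 := by norm_num [localU]

lemma localU_ne_zero {h : ℂ} (hh : h ∈ disk) (h1 : h ≠ 1) : localU h ≠ 0 := by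
  rw [localU_eq_mul]
  exact mul_ne_zero (sub_ne_zero.mpr h1.symm) (div_ne_zero (cubic_ne_zero hh) (by norm_num))

lemma differentiable_localU : Differentiable ℂ localU := by
  unfold localU; fun_prop

lemma deriv_localU (h : ℂ) : deriv localU h = -(2 * h ^ 2 + 4 * h ^ 3 / 3) := by
  have := ((((hasDerivAt_id h).pow 3).mul ((hasDerivAt_id h).const_add 2)).div_const 3).const_sub 1
  refine (this.congr_deriv ?_).deriv
  simp only [id_eq, Pi.pow_apply]
  push_cast
  ring

lemma differentiableOn_localA : DifferentiableOn ℂ localA disk := fun h hh => by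
  have := quadratic_ne_zero hh
  unfold localA
  fun_prop (disch := positivity)

/-- The slowly varying factor in the contour integral for the Taylor coefficients. Subtracting
`localA 0` changes only the coefficient of index `0`, and makes this factor vanish to third order
at the saddle point `0` of `localU`. -/
noncomputable def contourAmplitude (h : ℂ) : ℂ :=
  (localA h - localA 0) * deriv localU h / localU h

lemma contourAmplitude_eq_pow_mul {h : ℂ} (hh : h ∈ disk) :
    contourAmplitude h = h ^ 3 * (ampl * ((6 + 9 * h + 8 * h ^ 2 + 4 * h ^ 3) * (2 + 4 * h / 3)
      / ((1 + h + h ^ 2) ^ 2 * localU h))) := by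
  have := quadratic_ne_zero hh
  rw [contourAmplitude, deriv_localU, localA, localA]
  rcases eq_or_ne (localU h) 0 with h0 | h0
  · simp [h0]
  · field_simp
    ring

lemma continuousOn_contourAmplitude : ContinuousOn contourAmplitude (disk \ {1}) := by
  have hderiv : Continuous (deriv localU) := by
    simp_rw [funext deriv_localU]; fun_prop
  exact (((differentiableOn_localA.continuousOn.mono Set.sdiff_subset).sub
    continuousOn_const).mul hderiv.continuousOn).div
    differentiable_localU.continuous.continuousOn fun h hh => localU_ne_zero hh.1 hh.2

lemma continuousOn_inv_localU : ContinuousOn (fun h => (localU h)⁻¹) (disk \ {1}) :=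
  differentiable_localU.continuous.continuousOn.inv₀ fun _ hh => localU_ne_zero hh.1 hh.2

lemma zero_mem_disk : (0 : ℂ) ∈ disk := by
  rw [mem_disk_iff]; norm_num

lemma one_mem_disk : (1 : ℂ) ∈ disk := by
  rw [mem_disk_iff]; norm_num

lemma contourAmplitude_sub_isBigO :
    (fun z => contourAmplitude z - 12 * ampl * z ^ 3) =O[𝓝 0] fun z => z ^ (3 + 1) := by
  have hK : DifferentiableAt ℂ (fun h => (ampl : ℂ) * ((6 + 9 * h + 8 * h ^ 2 + 4 * h ^ 3)
      * (2 + 4 * h / 3) / ((1 + h + h ^ 2) ^ 2 * localU h))) 0 := by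
    have := differentiable_localU
    exact (DifferentiableAt.div (by fun_prop) (by fun_prop) (by simp [localU_zero])).const_mul _
  refine (pow_mul_sub_isBigO hK 3).congr' ?_ .rfl
  filter_upwards [isOpen_ball.mem_nhds zero_mem_disk] with z hz
  rw [contourAmplitude_eq_pow_mul hz, localU_zero]
  ring

lemma inv_localU_sub_isBigO :
    (fun z => (localU z)⁻¹ - (1 - (-2 / 3) * z ^ 3)) =O[𝓝 0] fun z => z ^ (3 + 1) := by
  have hK : DifferentiableAt ℂ (fun h => (2 + h) / 3 * (localU h)⁻¹) 0 := by
    have := differentiable_localU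
    exact DifferentiableAt.mul (by fun_prop) (DifferentiableAt.inv (by fun_prop)
      (by simp [localU_zero]))
  refine (pow_mul_sub_isBigO hK 3).congr' ?_ .rfl
  filter_upwards [differentiable_localU.continuous.continuousAt.eventually_ne
    (localU_zero ▸ one_ne_zero : localU 0 ≠ 0)] with z hz
  have hinv : (localU z)⁻¹ = 1 + z ^ 3 * ((2 + z) / 3 * (localU z)⁻¹) := by
    field_simp
    rw [localU]
    ring
  rw [localU_zero]
  linear_combination -hinv

/-- The points of steepest descent at which the contour leaves the saddle point `0`: for
`s = ±√3` this is `4 exp (±π i / 3)`. -/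
def vertex (s : ℝ) : ℂ := ⟨2, 2 * s⟩

lemma vertex_pow_three {s : ℝ} (hs : s ^ 2 = 3) : vertex s ^ 3 = -64 := by
  have hv : vertex s = 2 + 2 * s * I := by apply Complex.ext <;> simp [vertex]
  have hs' : (s : ℂ) ^ 2 = 3 := mod_cast hs
  rw [hv]
  linear_combination (8 * s * I ^ 3 + 24 * I ^ 2) * hs' + (72 + 24 * s * I) * I_sq

lemma vertex_mem_disk {s : ℝ} (hs : s ^ 2 = 3) : vertex s ∈ disk := by
  rw [mem_disk_iff, vertex]; nlinarith

lemma one_lt_norm_localU_of_mem_segment_zero_vertex {s : ℝ} (hs : s ^ 2 = 3) {z : ℂ}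
    (hz : z ∈ segment ℝ 0 (vertex s)) (hz0 : z ≠ 0) : 1 < ‖localU z‖ := by
  rw [segment_eq_image'] at hz
  obtain ⟨t, ⟨ht0, -⟩, rfl⟩ := hz
  have ht : 0 < t := ht0.lt_of_ne' fun h => hz0 (by simp [h])
  have hU : localU (0 + t • (vertex s - 0))
      = 1 + ((64 / 3 * t ^ 3 : ℝ) : ℂ) * (2 + t * vertex s) := by
    rw [localU, sub_zero, zero_add, real_smul, mul_pow, vertex_pow_three hs]
    push_cast
    ring
  refine lt_of_lt_of_le ?_ (re_le_norm _)
  rw [hU]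
  simp only [add_re, one_re, re_ofReal_mul, re_ofNat, vertex]
  have : 0 < 64 / 3 * t ^ 3 * (2 + t * 2) := by positivity
  linarith

lemma one_lt_norm_localU_of_two_le_re {z : ℂ} (hz : 2 ≤ z.re) : 1 < ‖localU z‖ := by
  have hz2 : 2 ≤ ‖z‖ := hz.trans (re_le_norm z)
  have hz4 : 4 ≤ ‖2 + z‖ := le_trans (by simp; linarith) (re_le_norm (2 + z))
  have hprod : 2 ^ 3 * 4 / 3 ≤ ‖z ^ 3 * (2 + z) / 3‖ := by
    rw [norm_div, norm_mul, norm_pow, show ‖(3 : ℂ)‖ = 3 by norm_num]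
    gcongr
  have := norm_sub_norm_le (z ^ 3 * (2 + z) / 3) 1
  rw [localU, norm_sub_rev]
  rw [norm_one] at this
  linarith

lemma two_le_re_of_mem_segment_vertex {s s' : ℝ} {z : ℂ}
    (hz : z ∈ segment ℝ (vertex s) (vertex s')) : 2 ≤ z.re := by
  rw [segment_eq_image'] at hz
  obtain ⟨t, -, rfl⟩ := hz
  simp [vertex]

lemma segment_subset_disk_diff {a b : ℂ} (ha : a ∈ disk) (hb : b ∈ disk)
    (hU : ∀ z ∈ segment ℝ a b, localU z ≠ 0) : segment ℝ a b ⊆ disk \ {1} := fun z hz =>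
  ⟨(convex_ball 4 (17 / 4)).segment_subset ha hb hz, fun h1 => hU z hz (by
    rw [Set.mem_singleton_iff.mp h1, localU_one])⟩

section Coefficients

variable {α : ℕ → ℂ}

lemma hasFPowerSeriesAt_of_eventually_hasSum
    (hα : ∀ᶠ h in 𝓝 1, HasSum (fun k => α k * localU h ^ k) (localA h)) :
    HasFPowerSeriesAt (fun u => ∑' k, α k * u ^ k) (FormalMultilinearSeries.ofScalars ℂ α) 0 := by
  obtain ⟨h, ⟨hh, hdisk⟩, h1⟩ := ((hα.and (isOpen_ball.mem_nhds one_mem_disk)).filter_mono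
    nhdsWithin_le_nhds |>.and eventually_mem_nhdsWithin : ∀ᶠ h in 𝓝[≠] (1 : ℂ), _).exists
  exact hasFPowerSeriesAt_tsum_mul_pow (localU_ne_zero hdisk h1) hh.summable

lemma isExactOn_contourAmplitude_mul_pow_sub_residue
    (hα : ∀ᶠ h in 𝓝 1, HasSum (fun k => α k * localU h ^ k) (localA h)) {p : ℕ} (hp : p ≠ 0) :
    IsExactOn (fun z => contourAmplitude z * (localU z)⁻¹ ^ p - α p / (z - 1)) (disk \ {1}) := by
  have hseries := (hasFPowerSeriesAt_of_eventually_hasSum hα).sub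
    (hasFPowerSeriesAt_const (𝕜 := ℂ) (c := localA 0) (e := (0 : ℂ)))
  have hcoeff : (FormalMultilinearSeries.ofScalars ℂ α -
      constFormalMultilinearSeries ℂ ℂ (localA 0)).coeff p = α p := by
    rw [FormalMultilinearSeries.coeff, FormalMultilinearSeries.sub_apply,
      constFormalMultilinearSeries_apply_of_nonzero hp, sub_zero]
    exact FormalMultilinearSeries.coeff_ofScalars
  have hintegrand (z : ℂ) : contourAmplitude z * (localU z)⁻¹ ^ p
      = (localA z - localA 0) * deriv localU z / localU z ^ (p + 1) := by
    rw [contourAmplitude]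
    ring
  simp_rw [hintegrand, ← hcoeff]
  exact isExactOn_mul_deriv_div_pow_sub_residue one_mem_disk
    differentiable_localU.differentiableOn localU_one (by norm_num [deriv_localU])
    (fun z hz h1 => localU_ne_zero hz h1) p (differentiableOn_localA.sub_const (localA 0)) hseries
    (hα.mono fun h hh => by simp [hh.tsum_eq])

lemma im_div_pos {a b : ℂ} (hab : 0 < a.im * b.re - a.re * b.im) : 0 < (a / b).im := by
  have hb : b ≠ 0 := by rintro rfl; simp at hab
  rw [div_im, ← sub_div]
  exact div_pos hab (normSq_pos.mpr hb)

lemma two_pi_I_mul_eq_segmentIntegral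
    (hα : ∀ᶠ h in 𝓝 1, HasSum (fun k => α k * localU h ^ k) (localA h)) {p : ℕ} (hp : p ≠ 0) :
    2 * Real.pi * I * α p =
      segmentIntegral (fun z => contourAmplitude z * (localU z)⁻¹ ^ p) 0 (vertex (-√3))
      + segmentIntegral (fun z => contourAmplitude z * (localU z)⁻¹ ^ p) (vertex (-√3)) (vertex √3)
      - segmentIntegral (fun z => contourAmplitude z * (localU z)⁻¹ ^ p) 0 (vertex √3) := by
  have h3 : √3 ^ 2 = 3 := Real.sq_sqrt (by norm_num)
  rw [sub_eq_add_neg, ← segmentIntegral_symm]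
  refine (segmentIntegral_triangle_eq_residue (convex_ball 4 (17 / 4)) zero_mem_disk
    (vertex_mem_disk (by rw [neg_sq, h3])) (vertex_mem_disk h3)
    (continuousOn_contourAmplitude.mul (continuousOn_inv_localU.pow p))
    (isExactOn_contourAmplitude_mul_pow_sub_residue hα hp) ?_ ?_ ?_).symm
  all_goals
    apply im_div_pos
    simp only [vertex, sub_re, sub_im, zero_re, zero_im, one_re, one_im]
    linarith [Real.sqrt_pos.mpr (show (0 : ℝ) < 3 by norm_num)]

end Coefficients

section Contributions

variable {s : ℝ}

lemma segmentIntegral_zero_vertex_isBigO (hs : s ^ 2 = 3) :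
    (fun p : ℕ => segmentIntegral (fun z => contourAmplitude z * (localU z)⁻¹ ^ p) 0 (vertex s)
        - 12 * ampl * vertex s ^ 4 *
          ((128 / 3 * p) ^ (-(4 : ℝ) / 3) * (1 / 3) * Real.Gamma (4 / 3) : ℝ))
      =O[atTop] fun p : ℕ => (p : ℝ) ^ (-(5 : ℝ) / 3) := by
  have hnorm {z : ℂ} (hz : z ∈ segment ℝ 0 (vertex s)) (hz0 : z ≠ 0) : 1 < ‖localU z‖ :=
    one_lt_norm_localU_of_mem_segment_zero_vertex hs hz hz0
  have hsub := segment_subset_disk_diff zero_mem_disk (vertex_mem_disk hs) fun z hz h0 => by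
    rcases eq_or_ne z 0 with rfl | hz0
    · exact one_ne_zero (localU_zero.symm.trans h0)
    · exact absurd (hnorm hz hz0) (by simp [h0])
  have := segmentIntegral_mul_pow_sub_isBigO (j := 3) (k := 3) (B := 128 / 3) three_ne_zero
    (by norm_num) (by rw [vertex_pow_three hs]; push_cast; norm_num)
    (continuousOn_contourAmplitude.mono hsub) (continuousOn_inv_localU.mono hsub)
    (fun z hz hz0 => by rw [norm_inv]; exact inv_lt_one_of_one_lt₀ (hnorm hz hz0))
    contourAmplitude_sub_isBigO inv_localU_sub_isBigO
  convert this using 7 <;> norm_num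

lemma segmentIntegral_vertex_vertex_isBigO {s' : ℝ} (hs : s ^ 2 = 3) (hs' : s' ^ 2 = 3) :
    (fun p : ℕ =>
        segmentIntegral (fun z => contourAmplitude z * (localU z)⁻¹ ^ p) (vertex s) (vertex s'))
      =O[atTop] fun p : ℕ => (p : ℝ) ^ (-(5 : ℝ) / 3) := by
  have hnorm {z : ℂ} (hz : z ∈ segment ℝ (vertex s) (vertex s')) : 1 < ‖localU z‖ :=
    one_lt_norm_localU_of_two_le_re (two_le_re_of_mem_segment_vertex hz)
  have hsub := segment_subset_disk_diff (vertex_mem_disk hs) (vertex_mem_disk hs')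
    fun z hz h0 => absurd (hnorm hz) (by simp [h0])
  exact segmentIntegral_mul_pow_isBigO (continuousOn_contourAmplitude.mono hsub)
    (continuousOn_inv_localU.mono hsub)
    (fun z hz => by rw [norm_inv]; exact inv_lt_one_of_one_lt₀ (hnorm hz)) _

end Contributions

lemma Gamma_neg_third_mul_Gamma_four_thirds :
    Real.Gamma (-1 / 3) * Real.Gamma (4 / 3) = -(2 * Real.pi / √3) := by
  have hreflection := Real.Gamma_mul_Gamma_one_sub (-1 / 3)
  rw [show Real.pi * (-1 / 3) = -(Real.pi / 3) by ring, Real.sin_neg, Real.sin_pi_div_three,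
    show (1 - -1 / 3 : ℝ) = 4 / 3 by norm_num] at hreflection
  rw [hreflection]
  field_simp

lemma ampl_mul_rpow : ampl * ((3 : ℝ) / 2) ^ ((4 : ℝ) / 3) = -(bconst / 4) := by
  rw [ampl, bconst, mul_assoc, ← Real.rpow_add (by norm_num),
    show (7 / 3 + 4 / 3 : ℝ) = 3 + 2 / 3 by norm_num, Real.rpow_add (by norm_num)]
  norm_num
  ring

lemma mul_rpow_neg_four_thirds {x : ℝ} (hx : 0 ≤ x) :
    (128 / 3 * x) ^ (-(4 : ℝ) / 3) = 1 / 256 * (3 / 2) ^ ((4 : ℝ) / 3) * x ^ (-(4 : ℝ) / 3) := by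
  rw [show 128 / 3 * x = 4 ^ (3 : ℝ) * ((3 / 2)⁻¹ * x) by norm_num; ring,
    Real.mul_rpow (by positivity) (by positivity), Real.mul_rpow (by positivity) hx,
    ← Real.rpow_mul (by norm_num), Real.inv_rpow (by norm_num), ← Real.rpow_neg (by norm_num)]
  norm_num
  ring

lemma leading_coefficient {x : ℝ} (hx : 0 ≤ x) :
    1536 * √3 * ampl / Real.pi * ((128 / 3 * x) ^ (-(4 : ℝ) / 3) * (1 / 3) * Real.Gamma (4 / 3))
      = bconst / Real.Gamma (-1 / 3) * x ^ (-(4 : ℝ) / 3) := by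
  have hGamma := Gamma_neg_third_mul_Gamma_four_thirds
  have hne : Real.Gamma (-1 / 3) ≠ 0 := by
    refine left_ne_zero_of_mul (b := Real.Gamma (4 / 3)) ?_
    rw [hGamma, neg_ne_zero]
    positivity
  have h43 : Real.Gamma (4 / 3) = -(2 * Real.pi / √3) / Real.Gamma (-1 / 3) := by
    rw [← hGamma, mul_div_cancel_left₀ _ hne]
  calc _ = 2 * √3 / Real.pi * (ampl * (3 / 2) ^ ((4 : ℝ) / 3)) * Real.Gamma (4 / 3)
          * x ^ (-(4 : ℝ) / 3) := by
        rw [mul_rpow_neg_four_thirds hx]; ring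
    _ = _ := by
        rw [ampl_mul_rpow, h43]
        field_simp
        ring

lemma vertex_neg_pow_four_sub_vertex_pow_four {s : ℝ} (hs : s ^ 2 = 3) :
    vertex (-s) ^ 4 - vertex s ^ 4 = 256 * s * I := by
  have hsub : vertex s - vertex (-s) = 4 * s * I := by
    apply Complex.ext
    · simp [vertex]
    · simp [vertex]; ring
  have hcube := vertex_pow_three hs
  have hcube' := vertex_pow_three (s := -s) (by rw [neg_sq, hs])
  linear_combination vertex (-s) * hcube' - vertex s * hcube + 64 * hsub

theorem coefficient_sub_isBigO {α : ℕ → ℂ}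
    (hα : ∀ᶠ h in 𝓝 1, HasSum (fun k => α k * localU h ^ k) (localA h)) :
    (fun p : ℕ => α p - ((1536 * √3 * ampl / Real.pi *
        ((128 / 3 * p) ^ (-(4 : ℝ) / 3) * (1 / 3) * Real.Gamma (4 / 3)) : ℝ) : ℂ))
      =O[atTop] fun p : ℕ => (p : ℝ) ^ (-(5 : ℝ) / 3) := by
  have h3 : √3 ^ 2 = 3 := Real.sq_sqrt (by norm_num)
  have h3' : (-√3) ^ 2 = 3 := by rw [neg_sq, h3]
  refine ((((segmentIntegral_zero_vertex_isBigO h3').add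
    (segmentIntegral_vertex_vertex_isBigO h3' h3)).sub
    (segmentIntegral_zero_vertex_isBigO h3)).const_mul_left (2 * Real.pi * I)⁻¹).congr' ?_ .rfl
  filter_upwards [eventually_ne_atTop 0] with p hp
  have hvertices := vertex_neg_pow_four_sub_vertex_pow_four h3
  have hcoeff := two_pi_I_mul_eq_segmentIntegral hα hp
  set J : ℝ := (128 / 3 * p) ^ (-(4 : ℝ) / 3) * (1 / 3) * Real.Gamma (4 / 3)
  have hpi : (Real.pi : ℂ) ≠ 0 := ofReal_ne_zero.mpr Real.pi_ne_zero
  have hmain : 2 * Real.pi * I * (1536 * √3 * ampl / Real.pi * J)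
      = 12 * ampl * J * (vertex (-√3) ^ 4 - vertex √3 ^ 4) := by
    rw [hvertices]
    field_simp
    ring
  rw [inv_mul_eq_iff_eq_mul₀ (by simp [hpi])]
  push_cast
  linear_combination hmain - hcoeff

/-- The coefficients `a p` are the Taylor coefficients at `0` of the analytic function
`A = Â ∘ û⁻¹`; this is encoded by the hypothesis that near `H = 0` the power series
`Σ a_p u^p` evaluated at `u = û(H)` sums to `Â(H)`. -/
theorem statement0 (ρ : ℝ) (hρ : 0 < ρ) (a : ℕ → ℂ)
    (hA : ∀ H : ℂ, ‖H‖ < ρ → HasSum (fun p : ℕ => a p * uhat H ^ p) (Ahat H)) :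
    Asymptotics.IsBigO Filter.atTop
      (fun p : ℕ => a p * (uc : ℂ) ^ p
        - (((bconst / Real.Gamma (-1/3)) * (p : ℝ) ^ (-(4:ℝ)/3) : ℝ) : ℂ))
      (fun p : ℕ => (p : ℝ) ^ (-(5:ℝ)/3)) := by
  have hα : ∀ᶠ h in 𝓝 1, HasSum (fun k => a k * (uc : ℂ) ^ k * localU h ^ k) (localA h) := by
    filter_upwards [ball_mem_nhds (1 : ℂ) hρ] with h hh
    have hsum := hA (1 - h) (by rwa [← dist_eq, dist_comm])
    simpa only [Ahat_one_sub, uhat_one_sub, mul_pow, mul_assoc] using hsum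
  simpa only [leading_coefficient (Nat.cast_nonneg _)] using coefficient_sub_isBigO hα
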